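/- arXiv:1009.4502 — 2 statements merged into one kernel-verified Lean document; each statement's English description precedes it below -/
import Mathlib

section
/- (Boltzmann's H theorem, inequality part.) Let f : ℝ³ → ℝ be continuous, strictly positive and rapidly decaying, and suppose ln f has polynomial growth (i.e. |ln f(v)| ≤ C(1+|v|)^m for some constants C, m). Then ∫_{ℝ³} C(f)(v) ln f(v) dv ≤ 0; indeed ∫_{ℝ³} C(f) ln f dv = −(1/4) ∫_{ℝ³}∫_{ℝ³}∫_{S²} (f(v')f(v*') − f(v)f(v*)) (ln(f(v')f(v*')) − ln(f(v)f(v*))) |(v−v*)·ω| dω dv* dv, and the integrand of the latter integral is pointwise nonnegative. -/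
/-!
For a unit vector `ω` the collision map `T_ω : (v, v*) ↦ (v', v*')` is the reflection of phase
space in the hyperplane orthogonal to `(ω, −ω)`. It is a linear involution, so it has determinant
`±1` and preserves Lebesgue measure; so does the exchange `(v, v*) ↦ (v*, v)`. The collision rate
`F = (f(v')f(v*') − f(v)f(v*)) |(v−v*)·ω|` is invariant under the exchange and changes sign under
`T_ω`. Hence `∫ F φ(v)` equals `∫ F φ(v*)`, `−∫ F φ(v')` and `−∫ F φ(v*')` for every test function
`φ`; averaging these for `φ = ln f` gives the entropy identity, whose integrand is nonnegative
because `ln` is increasing.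

The changes of variables and Fubini's theorem are justified once `F φ(v)` is integrable. Since
`T_ω` conserves the energy `|v|² + |v*|²`, rapid decay of `f` bounds both products in `F` by every
negative power of `1 + |v|² + |v*|²`, which absorbs the polynomial growth of `φ` and of the kernel.
-/

open MeasureTheory
open scoped RealInnerProductSpace

noncomputable section

/-- The post-collision velocity `v' = v − ((v−v*)·ω)ω`. -/
def vPost (v vs ω : EuclideanSpace ℝ (Fin 3)) : EuclideanSpace ℝ (Fin 3) :=
  v - ⟪v - vs, ω⟫ • ω

/-- The post-collision velocity `v*' = v* + ((v−v*)·ω)ω`. -/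
def vsPost (v vs ω : EuclideanSpace ℝ (Fin 3)) : EuclideanSpace ℝ (Fin 3) :=
  vs + ⟪v - vs, ω⟫ • ω

/-- The surface measure on the unit sphere `S² ⊂ ℝ³`. -/
def sphereMeasure : Measure (Metric.sphere (0 : EuclideanSpace ℝ (Fin 3)) 1) :=
  (volume : Measure (EuclideanSpace ℝ (Fin 3))).toSphere

/-- The (dimensionless, hard-sphere) Boltzmann collision integral
`C(f)(v) = ∫_{ℝ³}∫_{S²} (f(v')f(v*') − f(v)f(v*)) |(v−v*)·ω| dω dv*`. -/
def collisionIntegral (f : EuclideanSpace ℝ (Fin 3) → ℝ)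
    (v : EuclideanSpace ℝ (Fin 3)) : ℝ :=
  ∫ vs, (∫ ω : Metric.sphere (0 : EuclideanSpace ℝ (Fin 3)) 1,
    (f (vPost v vs ω) * f (vsPost v vs ω) - f v * f vs) *
      |⟪v - vs, (ω : EuclideanSpace ℝ (Fin 3))⟫| ∂sphereMeasure)

/-- A function on `ℝ³` is rapidly decaying if `sup_v (1+|v|)^k f(v) < ∞` for every `k ∈ ℕ`. -/
def RapidlyDecaying (f : EuclideanSpace ℝ (Fin 3) → ℝ) : Prop :=
  ∀ k : ℕ, ∃ C : ℝ, ∀ v, (1 + ‖v‖) ^ k * f v ≤ C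

/-- `ln f` has polynomial growth: `|ln f(v)| ≤ C(1+|v|)^m` for some constants `C, m`. -/
def LogPolyGrowth (f : EuclideanSpace ℝ (Fin 3) → ℝ) : Prop :=
  ∃ (C : ℝ) (m : ℕ), ∀ v, |Real.log (f v)| ≤ C * (1 + ‖v‖) ^ m

open Metric Module

/-! ### Measure-theoretic preliminaries -/

lemma measurePreserving_linearMap_of_involutive {V : Type*} [NormedAddCommGroup V]
    [NormedSpace ℝ V] [FiniteDimensional ℝ V] [MeasurableSpace V] [BorelSpace V]
    (μ : Measure V) [μ.IsAddHaarMeasure] {L : V →ₗ[ℝ] V} (hL : Function.Involutive L) :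
    MeasurePreserving L μ μ := by
  have hdet : LinearMap.det L * LinearMap.det L = 1 := by
    rw [← LinearMap.det_comp, show L ∘ₗ L = LinearMap.id from LinearMap.ext hL, LinearMap.det_id]
  refine ⟨L.continuous_of_finiteDimensional.measurable, ?_⟩
  rw [Measure.map_linearMap_addHaar_eq_smul_addHaar μ (left_ne_zero_of_mul_eq_one hdet)]
  rcases mul_self_eq_one_iff.mp hdet with h | h <;> simp [h]

lemma integral_comp_of_measurePreserving {α β G : Type*} [MeasurableSpace α] [MeasurableSpace β]
    [NormedAddCommGroup G] [NormedSpace ℝ G] {μ : Measure α} {ν : Measure β} {S : α → β}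
    (hS : MeasurePreserving S μ ν) {g : β → G} (hg : AEStronglyMeasurable g ν) :
    ∫ x, g (S x) ∂μ = ∫ y, g y ∂ν := by
  rw [← hS.map_eq] at hg ⊢
  exact (integral_map hS.aemeasurable hg).symm

lemma integrable_and_integral_mul_symmetrization {α : Type*} [MeasurableSpace α] {ν : Measure α}
    {S T : α → α} {F g : α → ℝ} (hS : MeasurePreserving S ν ν) (hT : MeasurePreserving T ν ν)
    (hFS : ∀ x, F (S x) = F x) (hFT : ∀ x, F (T x) = -F x)
    (hFg : Integrable (fun x ↦ F x * g x) ν) :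
    Integrable (fun x ↦ F x * (g x + g (S x) - g (T x) - g (S (T x)))) ν ∧
      ∫ x, F x * (g x + g (S x) - g (T x) - g (S (T x))) ∂ν = 4 * ∫ x, F x * g x ∂ν := by
  have hFgS : Integrable (fun x ↦ F (S x) * g (S x)) ν := hS.integrable_comp_of_integrable hFg
  have hFgT : Integrable (fun x ↦ F (T x) * g (T x)) ν := hT.integrable_comp_of_integrable hFg
  have hFgST : Integrable (fun x ↦ F (S (T x)) * g (S (T x))) ν :=
    hT.integrable_comp_of_integrable hFgS
  have hS_eq : ∫ x, F (S x) * g (S x) ∂ν = ∫ x, F x * g x ∂ν :=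
    integral_comp_of_measurePreserving hS hFg.aestronglyMeasurable
  have hT_eq : ∫ x, F (T x) * g (T x) ∂ν = ∫ x, F x * g x ∂ν :=
    integral_comp_of_measurePreserving hT hFg.aestronglyMeasurable
  have hST_eq : ∫ x, F (S (T x)) * g (S (T x)) ∂ν = ∫ x, F (S x) * g (S x) ∂ν :=
    integral_comp_of_measurePreserving hT hFgS.aestronglyMeasurable
  have hsum : (fun x ↦ F x * (g x + g (S x) - g (T x) - g (S (T x)))) = fun x ↦
      F x * g x + F (S x) * g (S x) + F (T x) * g (T x) + F (S (T x)) * g (S (T x)) := by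
    funext x
    rw [hFS, hFS, hFT]
    ring
  rw [hsum]
  refine ⟨((hFg.fun_add hFgS).fun_add hFgT).fun_add hFgST, ?_⟩
  rw [integral_add ((hFg.fun_add hFgS).fun_add hFgT) hFgST,
    integral_add (hFg.fun_add hFgS) hFgT, integral_add hFg hFgS, hST_eq, hT_eq, hS_eq]
  ring

lemma measurePreserving_prod_swap {X Y : Type*} [MeasurableSpace X] [MeasurableSpace Y]
    (σ : Measure X) (μ : Measure Y) [SFinite σ] [SFinite μ] :
    MeasurePreserving (fun p : X × Y × Y ↦ (p.1, p.2.swap))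
      (σ.prod (μ.prod μ)) (σ.prod (μ.prod μ)) :=
  (MeasurePreserving.id σ).prod Measure.measurePreserving_swap

lemma integral_prod_prod_symm {X Y Z G : Type*} [MeasurableSpace X] [MeasurableSpace Y]
    [MeasurableSpace Z] [NormedAddCommGroup G] [NormedSpace ℝ G] {σ : Measure X} {μ : Measure Y}
    {ν : Measure Z} [SFinite σ] [SFinite μ] [SFinite ν] {g : X × Y × Z → G}
    (hg : Integrable g (σ.prod (μ.prod ν))) :
    ∫ p, g p ∂σ.prod (μ.prod ν) = ∫ y, ∫ z, ∫ x, g (x, y, z) ∂σ ∂ν ∂μ := by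
  rw [integral_prod_symm _ hg, integral_prod _ hg.integral_prod_right]

/-! ### The energy weight -/

section EnergyWeight

variable {E : Type*} [NormedAddCommGroup E]

/-- The weight `1 + |v|² + |v*|²` on phase space, which is conserved in collisions and against
which the decay of the collision rate is measured. -/
def energyWeight (p : E × E) : ℝ := 1 + ‖p.1‖ ^ 2 + ‖p.2‖ ^ 2

lemma energyWeight_pos (p : E × E) : 0 < energyWeight p := by
  unfold energyWeight
  positivity

lemma energyWeight_le_sq_mul (p : E × E) :
    energyWeight p ≤ ((1 + ‖p.1‖) * (1 + ‖p.2‖)) ^ 2 := by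
  rw [energyWeight, ← sub_nonneg]
  ring_nf
  positivity

lemma one_add_norm_fst_le_two_mul_energyWeight (p : E × E) :
    1 + ‖p.1‖ ≤ 2 * energyWeight p := by
  unfold energyWeight
  nlinarith [sq_nonneg (‖p.1‖ - 1), sq_nonneg ‖p.2‖]

lemma exists_mul_mul_energyWeight_pow_le {f : E → ℝ} (hnonneg : ∀ v, 0 ≤ f v)
    (hdec : ∀ k : ℕ, ∃ C : ℝ, ∀ v, (1 + ‖v‖) ^ k * f v ≤ C) (k : ℕ) :
    ∃ C : ℝ, ∀ p : E × E, f p.1 * f p.2 * energyWeight p ^ k ≤ C := by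
  obtain ⟨C, hC⟩ := hdec (2 * k)
  have hf (v : E) : 0 ≤ (1 + ‖v‖) ^ (2 * k) * f v := mul_nonneg (by positivity) (hnonneg v)
  refine ⟨C * C, fun p ↦ ?_⟩
  calc f p.1 * f p.2 * energyWeight p ^ k
      ≤ f p.1 * f p.2 * (((1 + ‖p.1‖) * (1 + ‖p.2‖)) ^ 2) ^ k :=
        mul_le_mul_of_nonneg_left
          (pow_le_pow_left₀ (energyWeight_pos p).le (energyWeight_le_sq_mul p) k)
          (mul_nonneg (hnonneg _) (hnonneg _))
    _ = ((1 + ‖p.1‖) ^ (2 * k) * f p.1) * ((1 + ‖p.2‖) ^ (2 * k) * f p.2) := by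
        rw [← pow_mul, mul_pow]
        ring
    _ ≤ C * C := mul_le_mul (hC _) (hC _) (hf _) ((hf 0).trans (hC 0))

lemma integrable_inv_energyWeight_pow [NormedSpace ℝ E] [FiniteDimensional ℝ E]
    [MeasurableSpace E] [BorelSpace E] (μ : Measure E) [μ.IsAddHaarMeasure] :
    Integrable (fun p : E × E ↦ (energyWeight p ^ (finrank ℝ E + 1))⁻¹) (μ.prod μ) := by
  have hdim : (finrank ℝ (E × E) : ℝ) < 2 * (finrank ℝ E + 1 : ℕ) := by
    rw [finrank_prod]
    push_cast
    linarith
  have hmeas : Measurable fun p : E × E ↦ (energyWeight p ^ (finrank ℝ E + 1))⁻¹ := by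
    unfold energyWeight
    fun_prop
  refine (integrable_rpow_neg_one_add_norm_sq hdim).mono' hmeas.aestronglyMeasurable
    (Filter.Eventually.of_forall fun p ↦ ?_)
  have hle : 1 + ‖p‖ ^ 2 ≤ energyWeight p := by
    rw [Prod.norm_def, energyWeight]
    rcases max_choice ‖p.1‖ ‖p.2‖ with h | h <;> rw [h] <;>
      linarith [sq_nonneg ‖p.1‖, sq_nonneg ‖p.2‖]
  have hW := energyWeight_pos p
  rw [Real.norm_of_nonneg (by positivity), neg_div, mul_div_cancel_left₀ _ two_ne_zero,
    Real.rpow_neg (by positivity), Real.rpow_natCast]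
  gcongr

end EnergyWeight

/-! ### The collision map -/

section CollisionMap

variable {E : Type*} [NormedAddCommGroup E] [InnerProductSpace ℝ E]

/-- The collision `(v, v*) ↦ (v', v*')` in direction `ω`, as a linear automorphism of phase space:
the reflection that fixes the hyperplane `(v − v*)·ω = 0` and negates `(ω, −ω)`. -/
def collisionMap (ω : sphere (0 : E) 1) : (E × E) ≃ₗ[ℝ] (E × E) :=
  Module.reflection (x := ((ω : E), -(ω : E)))
    (f := innerₗ E (ω : E) ∘ₗ (LinearMap.fst ℝ E E - LinearMap.snd ℝ E E))
    (by simp [inner_add_right, one_add_one_eq_two])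

lemma collisionMap_apply (ω : sphere (0 : E) 1) (p : E × E) :
    collisionMap ω p =
      (p.1 - ⟪p.1 - p.2, (ω : E)⟫ • (ω : E), p.2 + ⟪p.1 - p.2, (ω : E)⟫ • (ω : E)) := by
  simp [collisionMap, Module.reflection_apply, Prod.ext_iff, real_inner_comm, sub_eq_add_neg]

lemma involutive_collisionMap (ω : sphere (0 : E) 1) : Function.Involutive (collisionMap ω) :=
  Module.involutive_reflection _

lemma collisionMap_swap (ω : sphere (0 : E) 1) (p : E × E) :
    collisionMap ω p.swap = (collisionMap ω p).swap := by
  simp only [collisionMap_apply, Prod.fst_swap, Prod.snd_swap, Prod.swap_prod_mk,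
    ← neg_sub p.1 p.2, inner_neg_left, neg_smul, sub_neg_eq_add, ← sub_eq_add_neg]

lemma inner_sub_collisionMap (ω : sphere (0 : E) 1) (p : E × E) :
    ⟪(collisionMap ω p).1 - (collisionMap ω p).2, (ω : E)⟫ = -⟪p.1 - p.2, (ω : E)⟫ := by
  simp only [collisionMap_apply, inner_sub_left, inner_add_left, real_inner_smul_left,
    real_inner_self_eq_norm_sq, norm_eq_of_mem_sphere]
  ring

lemma energyWeight_collisionMap (ω : sphere (0 : E) 1) (p : E × E) :
    energyWeight (collisionMap ω p) = energyWeight p := by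
  simp only [energyWeight, collisionMap_apply, norm_sub_sq_real, norm_add_sq_real,
    real_inner_smul_right, norm_smul, norm_eq_of_mem_sphere, inner_sub_left, Real.norm_eq_abs,
    mul_one, sq_abs]
  ring

lemma abs_inner_sub_le_energyWeight (ω : sphere (0 : E) 1) (p : E × E) :
    |⟪p.1 - p.2, (ω : E)⟫| ≤ energyWeight p :=
  calc |⟪p.1 - p.2, (ω : E)⟫| ≤ ‖p.1 - p.2‖ := by
        simpa using abs_real_inner_le_norm (p.1 - p.2) (ω : E)
    _ ≤ ‖p.1‖ + ‖p.2‖ := norm_sub_le _ _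
    _ ≤ energyWeight p := by
        unfold energyWeight
        nlinarith [sq_nonneg (‖p.1‖ - 1), sq_nonneg (‖p.2‖ - 1)]

end CollisionMap

/-! ### The collision rate and the entropy production -/

section CollisionRate

variable {E : Type*} [NormedAddCommGroup E] [InnerProductSpace ℝ E] {f : E → ℝ}

/-- The integrand `(f(v')f(v*') − f(v)f(v*)) |(v−v*)·ω|` of the collision integral at
`(ω, v, v*)`. -/
def collisionRate (f : E → ℝ) (z : sphere (0 : E) 1 × E × E) : ℝ :=
  (f (collisionMap z.1 z.2).1 * f (collisionMap z.1 z.2).2 - f z.2.1 * f z.2.2) *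
    |⟪z.2.1 - z.2.2, (z.1 : E)⟫|

lemma collisionRate_swap (f : E → ℝ) (z : sphere (0 : E) 1 × E × E) :
    collisionRate f (z.1, z.2.swap) = collisionRate f z := by
  simp only [collisionRate, collisionMap_swap, Prod.fst_swap, Prod.snd_swap]
  rw [← neg_sub z.2.1, inner_neg_left, abs_neg, mul_comm (f z.2.2),
    mul_comm (f (collisionMap z.1 z.2).2)]

lemma collisionRate_collisionMap (f : E → ℝ) (z : sphere (0 : E) 1 × E × E) :
    collisionRate f (z.1, collisionMap z.1 z.2) = -collisionRate f z := by
  simp only [collisionRate, involutive_collisionMap z.1 z.2, inner_sub_collisionMap, abs_neg]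
  ring

/-- The entropy production `(f(v')f(v*') − f(v)f(v*)) (ln(f(v')f(v*')) − ln(f(v)f(v*))) |(v−v*)·ω|`
at `(ω, v, v*)`. -/
def entropyProduction (f : E → ℝ) (z : sphere (0 : E) 1 × E × E) : ℝ :=
  (f (collisionMap z.1 z.2).1 * f (collisionMap z.1 z.2).2 - f z.2.1 * f z.2.2) *
    (Real.log (f (collisionMap z.1 z.2).1 * f (collisionMap z.1 z.2).2) -
      Real.log (f z.2.1 * f z.2.2)) * |⟪z.2.1 - z.2.2, (z.1 : E)⟫|

lemma entropyProduction_nonneg (hpos : ∀ v, 0 < f v) (z : sphere (0 : E) 1 × E × E) :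
    0 ≤ entropyProduction f z :=
  mul_nonneg ((monotoneOn_id.monovaryOn Real.strictMonoOn_log.monotoneOn).sub_mul_sub_nonneg
    (mul_pos (hpos _) (hpos _)) (mul_pos (hpos _) (hpos _))) (abs_nonneg _)

lemma entropyProduction_eq_neg_collisionRate_mul (hpos : ∀ v, 0 < f v)
    (z : sphere (0 : E) 1 × E × E) :
    entropyProduction f z = -(collisionRate f z *
      (Real.log (f z.2.1) + Real.log (f z.2.2) - Real.log (f (collisionMap z.1 z.2).1) -
        Real.log (f (collisionMap z.1 z.2).2))) := by
  rw [entropyProduction, collisionRate, Real.log_mul (hpos _).ne' (hpos _).ne',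
    Real.log_mul (hpos _).ne' (hpos _).ne']
  ring

lemma exists_abs_collisionRate_mul_energyWeight_pow_le (hnonneg : ∀ v, 0 ≤ f v)
    (hdec : ∀ k : ℕ, ∃ C : ℝ, ∀ v, (1 + ‖v‖) ^ k * f v ≤ C) (k : ℕ) :
    ∃ C : ℝ, ∀ z : sphere (0 : E) 1 × E × E, |collisionRate f z| * energyWeight z.2 ^ k ≤ C := by
  obtain ⟨C, hC⟩ := exists_mul_mul_energyWeight_pow_le hnonneg hdec (k + 1)
  refine ⟨C + C, fun ⟨ω, p⟩ ↦ ?_⟩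
  set q := collisionMap ω p
  have hW := (energyWeight_pos p).le
  have hp : 0 ≤ f p.1 * f p.2 := mul_nonneg (hnonneg _) (hnonneg _)
  have hq : 0 ≤ f q.1 * f q.2 := mul_nonneg (hnonneg _) (hnonneg _)
  have hsub : |f q.1 * f q.2 - f p.1 * f p.2| ≤ f q.1 * f q.2 + f p.1 * f p.2 :=
    abs_sub_le_of_nonneg_of_le hq (le_add_of_nonneg_right hp) hp (le_add_of_nonneg_left hq)
  calc |collisionRate f (ω, p)| * energyWeight p ^ k
      = |f q.1 * f q.2 - f p.1 * f p.2| * |⟪p.1 - p.2, (ω : E)⟫| * energyWeight p ^ k := by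
        rw [collisionRate, abs_mul, abs_abs]
    _ ≤ (f q.1 * f q.2 + f p.1 * f p.2) * energyWeight p * energyWeight p ^ k := by
        gcongr
        exact abs_inner_sub_le_energyWeight ω p
    _ = f q.1 * f q.2 * energyWeight q ^ (k + 1) + f p.1 * f p.2 * energyWeight p ^ (k + 1) := by
        rw [energyWeight_collisionMap]
        ring
    _ ≤ C + C := add_le_add (hC q) (hC p)

end CollisionRate

/-! ### Integration over phase space -/

section PhaseSpace

variable {E : Type*} [NormedAddCommGroup E] [InnerProductSpace ℝ E] [MeasurableSpace E]
  [BorelSpace E] {f φ : E → ℝ}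

lemma measurable_collisionMap [SecondCountableTopology E] :
    Measurable fun z : sphere (0 : E) 1 × E × E ↦ collisionMap z.1 z.2 := by
  simp only [collisionMap_apply]
  fun_prop

lemma measurable_collisionRate [SecondCountableTopology E] (hf : Measurable f) :
    Measurable (collisionRate f) := by
  have hT := measurable_collisionMap (E := E)
  unfold collisionRate
  fun_prop

variable [FiniteDimensional ℝ E] (σ : Measure (sphere (0 : E) 1)) (μ : Measure E)
  [μ.IsAddHaarMeasure]

lemma measurePreserving_collision [SFinite σ] :
    MeasurePreserving (fun z : sphere (0 : E) 1 × E × E ↦ (z.1, collisionMap z.1 z.2))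
      (σ.prod (μ.prod μ)) (σ.prod (μ.prod μ)) :=
  (MeasurePreserving.id σ).skew_product (g := fun ω p ↦ collisionMap ω p)
    measurable_collisionMap (Filter.Eventually.of_forall fun ω ↦
      (measurePreserving_linearMap_of_involutive (L := (collisionMap ω).toLinearMap) (μ.prod μ)
        (involutive_collisionMap ω)).map_eq)

lemma integrable_collisionRate_mul [IsFiniteMeasure σ] (hf : Measurable f)
    (hnonneg : ∀ v, 0 ≤ f v)
    (hdec : ∀ k : ℕ, ∃ C : ℝ, ∀ v, (1 + ‖v‖) ^ k * f v ≤ C) (hφ : Measurable φ)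
    (hgrowth : ∃ (C : ℝ) (m : ℕ), ∀ v, |φ v| ≤ C * (1 + ‖v‖) ^ m) :
    Integrable (fun z ↦ collisionRate f z * φ z.2.1) (σ.prod (μ.prod μ)) := by
  obtain ⟨L, m, hL⟩ := hgrowth
  have hL0 : 0 ≤ L := by simpa using (abs_nonneg _).trans (hL 0)
  obtain ⟨C, hC⟩ :=
    exists_abs_collisionRate_mul_energyWeight_pow_le hnonneg hdec (m + (finrank ℝ E + 1))
  refine (((integrable_inv_energyWeight_pow μ).comp_snd σ).const_mul (C * (L * 2 ^ m))).mono'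
    ((measurable_collisionRate hf).mul (by fun_prop)).aestronglyMeasurable
    (Filter.Eventually.of_forall fun z ↦ ?_)
  have hW := energyWeight_pos z.2
  have hφz : |φ z.2.1| ≤ L * (2 * energyWeight z.2) ^ m :=
    (hL _).trans (by gcongr; exact one_add_norm_fst_le_two_mul_energyWeight z.2)
  rw [Real.norm_eq_abs, abs_mul, ← div_eq_mul_inv, le_div_iff₀ (by positivity)]
  calc |collisionRate f z| * |φ z.2.1| * energyWeight z.2 ^ (finrank ℝ E + 1)
      ≤ |collisionRate f z| * (L * (2 * energyWeight z.2) ^ m) *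
          energyWeight z.2 ^ (finrank ℝ E + 1) := by gcongr
    _ = |collisionRate f z| * energyWeight z.2 ^ (m + (finrank ℝ E + 1)) * (L * 2 ^ m) := by ring
    _ ≤ C * (L * 2 ^ m) := by gcongr; exact hC z

lemma integrable_and_integral_entropyProduction [SFinite σ] (hpos : ∀ v, 0 < f v)
    (hint : Integrable (fun z ↦ collisionRate f z * Real.log (f z.2.1)) (σ.prod (μ.prod μ))) :
    Integrable (entropyProduction f) (σ.prod (μ.prod μ)) ∧
      ∫ z, entropyProduction f z ∂σ.prod (μ.prod μ) =
        -4 * ∫ z, collisionRate f z * Real.log (f z.2.1) ∂σ.prod (μ.prod μ) := by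
  obtain ⟨hsym, heq⟩ := integrable_and_integral_mul_symmetrization
    (measurePreserving_prod_swap σ μ) (measurePreserving_collision σ μ) (collisionRate_swap f)
    (collisionRate_collisionMap f) hint
  rw [funext (entropyProduction_eq_neg_collisionRate_mul hpos), integral_neg, neg_mul, ← heq]
  exact ⟨hsym.neg, rfl⟩

theorem H_theorem_inequality_general [IsFiniteMeasure σ] (hf : Measurable f) (hpos : ∀ v, 0 < f v)
    (hdec : ∀ k : ℕ, ∃ C : ℝ, ∀ v, (1 + ‖v‖) ^ k * f v ≤ C)
    (hlog : ∃ (C : ℝ) (m : ℕ), ∀ v, |Real.log (f v)| ≤ C * (1 + ‖v‖) ^ m) :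
    (∀ z, 0 ≤ entropyProduction f z) ∧
    (∫ v, (∫ vs, ∫ ω, collisionRate f (ω, v, vs) ∂σ ∂μ) * Real.log (f v) ∂μ) =
      -(1 / 4) * ∫ v, ∫ vs, ∫ ω, entropyProduction f (ω, v, vs) ∂σ ∂μ ∂μ ∧
    (∫ v, (∫ vs, ∫ ω, collisionRate f (ω, v, vs) ∂σ ∂μ) * Real.log (f v) ∂μ) ≤ 0 := by
  have hnonneg := entropyProduction_nonneg hpos
  have hint := integrable_collisionRate_mul σ μ hf (fun v ↦ (hpos v).le) hdec hf.log hlog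
  obtain ⟨hint', heq⟩ := integrable_and_integral_entropyProduction σ μ hpos hint
  have hid : (∫ v, (∫ vs, ∫ ω, collisionRate f (ω, v, vs) ∂σ ∂μ) * Real.log (f v) ∂μ) =
      -(1 / 4) * ∫ v, ∫ vs, ∫ ω, entropyProduction f (ω, v, vs) ∂σ ∂μ ∂μ := by
    rw [integral_prod_prod_symm hint, integral_prod_prod_symm hint'] at heq
    simp only [integral_mul_const] at heq
    linarith
  refine ⟨hnonneg, hid, hid.trans_le (mul_nonpos_of_nonpos_of_nonneg (by norm_num) ?_)⟩
  exact integral_nonneg fun v ↦ integral_nonneg fun vs ↦ integral_nonneg fun ω ↦ hnonneg _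

end PhaseSpace

instance : IsFiniteMeasure sphereMeasure := by unfold sphereMeasure; infer_instance

lemma collisionMap_mk_eq_post (ω : sphere (0 : EuclideanSpace ℝ (Fin 3)) 1)
    (v vs : EuclideanSpace ℝ (Fin 3)) :
    collisionMap ω (v, vs) = (vPost v vs ω, vsPost v vs ω) :=
  collisionMap_apply ω (v, vs)

/-- **Boltzmann's H theorem (inequality part).** For `f` continuous, strictly positive and
rapidly decaying with `ln f` of polynomial growth, `∫ C(f) ln f dv ≤ 0`; indeed
`∫ C(f) ln f dv = −(1/4) ∫∫∫ (f'f*' − ff*)(ln(f'f*') − ln(ff*)) |(v−v*)·ω| dω dv* dv`,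
whose integrand is pointwise nonnegative. -/
theorem H_theorem_inequality (f : EuclideanSpace ℝ (Fin 3) → ℝ)
    (hf_cont : Continuous f) (hf_pos : ∀ v, 0 < f v)
    (hf_dec : RapidlyDecaying f) (hf_log : LogPolyGrowth f) :
    (∀ v vs ω : EuclideanSpace ℝ (Fin 3), ‖ω‖ = 1 →
      0 ≤ (f (vPost v vs ω) * f (vsPost v vs ω) - f v * f vs) *
            (Real.log (f (vPost v vs ω) * f (vsPost v vs ω)) -
              Real.log (f v * f vs)) * |⟪v - vs, ω⟫|) ∧
    (∫ v, collisionIntegral f v * Real.log (f v)) =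
      -(1 / 4) * ∫ v, (∫ vs, (∫ ω : Metric.sphere (0 : EuclideanSpace ℝ (Fin 3)) 1,
        (f (vPost v vs ω) * f (vsPost v vs ω) - f v * f vs) *
          (Real.log (f (vPost v vs ω) * f (vsPost v vs ω)) - Real.log (f v * f vs)) *
          |⟪v - vs, (ω : EuclideanSpace ℝ (Fin 3))⟫| ∂sphereMeasure)) ∧
    (∫ v, collisionIntegral f v * Real.log (f v)) ≤ 0 := by
  obtain ⟨hnonneg, hid, hle⟩ := H_theorem_inequality_general sphereMeasure volume
    hf_cont.measurable hf_pos hf_dec hf_log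
  simp only [entropyProduction, collisionRate, collisionMap_mk_eq_post] at hid hle
  refine ⟨fun v vs ω hω ↦ ?_, hid, hle⟩
  simpa only [entropyProduction, collisionMap_mk_eq_post] using
    hnonneg (⟨ω, mem_sphere_zero_iff_norm.mpr hω⟩, v, vs)

end
end

section
/- Let g be an infinitesimal Maxwellian, i.e. g(v) = ρ + u·v + θ(|v|² − 3)/2 for some ρ, θ ∈ ℝ and u ∈ ℝ³, and let Q_M(g,g)(v) := M(v)^{−1} C(Mg)(v), where C is the hard-sphere collision integral and M the standard Maxwellian. Then Q_M(g,g) = (1/2) L_M(g²), i.e. for every v ∈ ℝ³, M(v)^{−1} C(Mg)(v) = (1/2) ∫_{ℝ³}∫_{S²} (g(v)² + g(v*)² − g(v')² − g(v*')²) |(v−v*)·ω| M(v*) dω dv*. -/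
/-!
A collision conserves momentum and energy. Energy conservation gives `M' M*' = M M*`, so `M(v)` can
be divided out of `C(Mg)(v)` and the integrand becomes `(g' g*' - g g*) |(v - v*)·ω| M*`. An
infinitesimal Maxwellian is a combination of `1`, `v` and `|v|²`, hence `g' + g*' = g + g*`.
Squaring this relation turns `g' g*' - g g*` into `(g² + g*² - g'² - g*'²) / 2`. The two
integrands thus agree pointwise up to the factor `1 / 2`, whether or not the integrals converge.
-/

open MeasureTheory
open scoped RealInnerProductSpace

noncomputable section

/-- The standard Maxwellian `M(v) = (2π)^{−3/2} exp(−|v|²/2)`. -/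
def stdMaxwellian (v : EuclideanSpace ℝ (Fin 3)) : ℝ :=
  (2 * Real.pi) ^ (-(3 : ℝ) / 2) * Real.exp (-‖v‖ ^ 2 / 2)

/-- The collision operator linearized at the standard Maxwellian `M`:
`L_Mφ(v) = ∫_{ℝ³}∫_{S²} (φ(v) + φ(v*) − φ(v') − φ(v*')) |(v−v*)·ω| M(v*) dω dv*`. -/
def linearizedCollision (φ : EuclideanSpace ℝ (Fin 3) → ℝ)
    (v : EuclideanSpace ℝ (Fin 3)) : ℝ :=
  ∫ vs, (∫ ω : Metric.sphere (0 : EuclideanSpace ℝ (Fin 3)) 1,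
    (φ v + φ vs - φ (vPost v vs ω) - φ (vsPost v vs ω)) *
      |⟪v - vs, (ω : EuclideanSpace ℝ (Fin 3))⟫| * stdMaxwellian vs ∂sphereMeasure)

lemma vPost_add_vsPost (v vs ω : EuclideanSpace ℝ (Fin 3)) :
    vPost v vs ω + vsPost v vs ω = v + vs :=
  sub_add_add_cancel v vs _

lemma inner_vPost_add_inner_vsPost (v vs ω u : EuclideanSpace ℝ (Fin 3)) :
    ⟪u, vPost v vs ω⟫ + ⟪u, vsPost v vs ω⟫ = ⟪u, v⟫ + ⟪u, vs⟫ := by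
  rw [← inner_add_right, vPost_add_vsPost, inner_add_right]

lemma norm_sq_vPost_add_norm_sq_vsPost (v vs : EuclideanSpace ℝ (Fin 3))
    {ω : EuclideanSpace ℝ (Fin 3)} (hω : ‖ω‖ = 1) :
    ‖vPost v vs ω‖ ^ 2 + ‖vsPost v vs ω‖ ^ 2 = ‖v‖ ^ 2 + ‖vs‖ ^ 2 := by
  rw [vPost, vsPost, norm_sub_sq_real, norm_add_sq_real, norm_smul, hω, mul_one,
    Real.norm_eq_abs, sq_abs, inner_smul_right, inner_smul_right, inner_sub_left]
  ring

lemma stdMaxwellian_pos (v : EuclideanSpace ℝ (Fin 3)) : 0 < stdMaxwellian v := by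
  unfold stdMaxwellian
  positivity

lemma stdMaxwellian_mul_stdMaxwellian (v w : EuclideanSpace ℝ (Fin 3)) :
    stdMaxwellian v * stdMaxwellian w =
      ((2 * Real.pi) ^ (-(3 : ℝ) / 2)) ^ 2 * Real.exp (-(‖v‖ ^ 2 + ‖w‖ ^ 2) / 2) := by
  rw [stdMaxwellian, stdMaxwellian, mul_mul_mul_comm, ← sq, ← Real.exp_add, neg_add, add_div]

lemma stdMaxwellian_vPost_mul_stdMaxwellian_vsPost (v vs : EuclideanSpace ℝ (Fin 3))
    {ω : EuclideanSpace ℝ (Fin 3)} (hω : ‖ω‖ = 1) :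
    stdMaxwellian (vPost v vs ω) * stdMaxwellian (vsPost v vs ω) =
      stdMaxwellian v * stdMaxwellian vs := by
  simp only [stdMaxwellian_mul_stdMaxwellian, norm_sq_vPost_add_norm_sq_vsPost v vs hω]

lemma inv_stdMaxwellian_mul_collisionIntegral (g : EuclideanSpace ℝ (Fin 3) → ℝ)
    (v : EuclideanSpace ℝ (Fin 3)) :
    (stdMaxwellian v)⁻¹ * collisionIntegral (fun w => stdMaxwellian w * g w) v =
      ∫ vs, (∫ ω : Metric.sphere (0 : EuclideanSpace ℝ (Fin 3)) 1,
        (g (vPost v vs ω) * g (vsPost v vs ω) - g v * g vs) *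
          |⟪v - vs, (ω : EuclideanSpace ℝ (Fin 3))⟫| * stdMaxwellian vs ∂sphereMeasure) := by
  rw [inv_mul_eq_iff_eq_mul₀ (stdMaxwellian_pos v).ne', collisionIntegral]
  simp only [← integral_const_mul]
  congr with vs
  congr with ω
  linear_combination g (vPost v vs ω) * g (vsPost v vs ω) *
    |⟪v - vs, (ω : EuclideanSpace ℝ (Fin 3))⟫| *
    stdMaxwellian_vPost_mul_stdMaxwellian_vsPost v vs (norm_eq_of_mem_sphere ω)

/-- A collision invariant: a function of the velocity whose sum over the two colliding particles is
unchanged by a collision. The identity holds for all velocities and unit vectors `ω`, not merely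
almost all. -/
def IsCollisionInvariant (g : EuclideanSpace ℝ (Fin 3) → ℝ) : Prop :=
  ∀ v vs ω : EuclideanSpace ℝ (Fin 3), ‖ω‖ = 1 →
    g (vPost v vs ω) + g (vsPost v vs ω) = g v + g vs

lemma isCollisionInvariant_const_add_inner_add_mul_norm_sq (a c : ℝ)
    (u : EuclideanSpace ℝ (Fin 3)) :
    IsCollisionInvariant fun v => a + ⟪u, v⟫ + c * ‖v‖ ^ 2 := by
  intro v vs ω hω
  linear_combination inner_vPost_add_inner_vsPost v vs ω u +
    c * norm_sq_vPost_add_norm_sq_vsPost v vs hω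

lemma IsCollisionInvariant.mul_sub_mul_eq {g : EuclideanSpace ℝ (Fin 3) → ℝ}
    (hg : IsCollisionInvariant g) (v vs : EuclideanSpace ℝ (Fin 3))
    {ω : EuclideanSpace ℝ (Fin 3)} (hω : ‖ω‖ = 1) :
    g (vPost v vs ω) * g (vsPost v vs ω) - g v * g vs =
      1 / 2 * (g v ^ 2 + g vs ^ 2 - g (vPost v vs ω) ^ 2 - g (vsPost v vs ω) ^ 2) := by
  have sq_sum_eq : (g (vPost v vs ω) + g (vsPost v vs ω)) ^ 2 = (g v + g vs) ^ 2 := by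
    rw [hg v vs ω hω]
  linear_combination 1 / 2 * sq_sum_eq

theorem quadratic_collision_of_infinitesimal_maxwellian_general
    {g : EuclideanSpace ℝ (Fin 3) → ℝ} (hg : IsCollisionInvariant g)
    (v : EuclideanSpace ℝ (Fin 3)) :
    (stdMaxwellian v)⁻¹ * collisionIntegral (fun w => stdMaxwellian w * g w) v =
      (1 / 2) * linearizedCollision (fun w => (g w) ^ 2) v := by
  rw [inv_stdMaxwellian_mul_collisionIntegral, linearizedCollision]
  simp only [← integral_const_mul]
  congr with vs
  congr with ω
  rw [hg.mul_sub_mul_eq v vs (norm_eq_of_mem_sphere ω)]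
  ring

/-- **Quadratic collision operator on infinitesimal Maxwellians.** If
`g(v) = ρ + u·v + θ(|v|² − 3)/2` and `Q_M(g,g) := M⁻¹ C(Mg)`, then
`Q_M(g,g) = (1/2) L_M(g²)` pointwise. -/
theorem quadratic_collision_of_infinitesimal_maxwellian
    (g : EuclideanSpace ℝ (Fin 3) → ℝ) (ρ θ : ℝ) (u : EuclideanSpace ℝ (Fin 3))
    (hg : ∀ v, g v = ρ + ⟪u, v⟫ + θ * (‖v‖ ^ 2 - 3) / 2) :
    ∀ v : EuclideanSpace ℝ (Fin 3),
      (stdMaxwellian v)⁻¹ * collisionIntegral (fun w => stdMaxwellian w * g w) v =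
        (1 / 2) * linearizedCollision (fun w => (g w) ^ 2) v := by
  have g_eq : g = fun v => (ρ - 3 * θ / 2) + ⟪u, v⟫ + θ / 2 * ‖v‖ ^ 2 := by
    ext v
    rw [hg]
    ring
  exact quadratic_collision_of_infinitesimal_maxwellian_general
    (g_eq ▸ isCollisionInvariant_const_add_inner_add_mul_norm_sq _ _ u)

end
end
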